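/- Let p > 1 satisfy α < (pσ − N)/(p − 1) and set q = p/(p−1). Then ∫_{ℝ^N} ρ(x)^{−p/q} |(−Δ)^{σ/2} φ_R(x)|^p dx → 0 as R → ∞. -/

import Mathlib

open MeasureTheory Real Filter

/-- The normalization constant `C_{N,σ}` of the fractional Laplacian. -/
noncomputable def fracC (N : ℕ) (σ : ℝ) : ℝ :=
  2 ^ (σ - 1) * σ * Real.Gamma (((N : ℝ) + σ) / 2) /
    (Real.pi ^ ((N : ℝ) / 2) * Real.Gamma (1 - σ / 2))

/-- The fractional Laplacian of order `σ/2`, as the absolutely convergent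
symmetrized singular integral. -/
noncomputable def fracLap (N : ℕ) (σ : ℝ)
    (g : EuclideanSpace ℝ (Fin N) → ℝ) (x : EuclideanSpace ℝ (Fin N)) : ℝ :=
  (fracC N σ / 2) *
    ∫ z : EuclideanSpace ℝ (Fin N),
      (2 * g x - g (x + z) - g (x - z)) / ‖z‖ ^ ((N : ℝ) + σ)

/-!
Dilation turns `(−Δ)^{σ/2} φ_R (x)` into `R^{−σ} F(x / R)` with `F = (−Δ)^{σ/2} φ`, where `φ` is a
fixed compactly supported `C²` function. Near the origin `F` is bounded, because the second
difference of `φ` is `O(min(1, |z|²))`. For `|x|` large only the values `|z| ≥ |x| / 2` see the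
support of `φ`, so `F(x) = O(|x|^{−N−σ})`. The lower bound on `ρ` gives
`ρ(x)^{−p/q} = O((1 + |x|)^{α(p−1)})`, and for `R ≥ 1` we have `1 + |x| ≤ R (1 + |x / R|)`. Changing
variables, the weighted integral is `O(R^{α(p−1) − σp + N})`: the exponent is negative by the
condition on `α`, and the remaining integral `∫ (1 + |u|)^{α(p−1) − (N+σ)p} du` is finite for the
same reason.
-/

open Asymptotics Bornology Module Topology

section SecondDifference

/-- The centred second difference of `g` at `x` with step `z`, with the sign for which it is
nonnegative at a maximum of `g`, as in the numerator of `fracLap`. -/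
def secondDiff {E : Type*} [AddGroup E] (g : E → ℝ) (x z : E) : ℝ :=
  2 * g x - g (x + z) - g (x - z)

lemma abs_secondDiff_le_of_abs_le {E : Type*} [AddGroup E] {g : E → ℝ} {B : ℝ}
    (hB : ∀ x, |g x| ≤ B) (x z : E) : |secondDiff g x z| ≤ 4 * B := by
  have h₀ := abs_le.1 (hB x)
  have h₁ := abs_le.1 (hB (x + z))
  have h₂ := abs_le.1 (hB (x - z))
  rw [secondDiff, abs_le]
  constructor <;> linarith

variable {E : Type*} [NormedAddCommGroup E] {g : E → ℝ}

lemma abs_div_norm_rpow_le {r m : ℝ} (hr : 0 ≤ r) (hg : ∀ y, r < ‖y‖ → g y = 0) (hm : 0 ≤ m)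
    {x y z : E} (hx : 2 * r < ‖x‖) (hxyz : ‖x‖ ≤ ‖y‖ + ‖z‖) :
    |g y| / ‖z‖ ^ m ≤ 2 ^ m * ‖x‖ ^ (-m) * |g y| := by
  rcases lt_or_ge r ‖y‖ with hy | hy
  · simp [hg y hy]
  have hx0 : 0 < ‖x‖ := by linarith
  have hz : ‖x‖ / 2 ≤ ‖z‖ := by linarith
  calc |g y| / ‖z‖ ^ m ≤ |g y| / (‖x‖ / 2) ^ m := by gcongr
    _ = 2 ^ m * ‖x‖ ^ (-m) * |g y| := by
        rw [Real.div_rpow hx0.le zero_le_two, Real.rpow_neg hx0.le]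
        field_simp

lemma abs_secondDiff_div_norm_rpow_le {r m : ℝ} (hr : 0 ≤ r) (hg : ∀ y, r < ‖y‖ → g y = 0)
    (hm : 0 ≤ m) {x : E} (hx : 2 * r < ‖x‖) (z : E) :
    |secondDiff g x z / ‖z‖ ^ m| ≤ 2 ^ m * ‖x‖ ^ (-m) * (|g (x + z)| + |g (x - z)|) := by
  have htri_add : ‖x‖ ≤ ‖x + z‖ + ‖z‖ := by simpa using norm_sub_le (x + z) z
  have htri_sub : ‖x‖ ≤ ‖x - z‖ + ‖z‖ := by simpa using norm_add_le (x - z) z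
  have hdiff : |secondDiff g x z| ≤ |g (x + z)| + |g (x - z)| := by
    rw [secondDiff, hg x (by linarith), mul_zero, zero_sub, ← abs_neg (g (x + z))]
    exact abs_sub _ _
  calc |secondDiff g x z / ‖z‖ ^ m| ≤ |g (x + z)| / ‖z‖ ^ m + |g (x - z)| / ‖z‖ ^ m := by
        rw [← add_div, abs_div, abs_of_nonneg (by positivity : 0 ≤ ‖z‖ ^ m)]
        gcongr
    _ ≤ _ := by
        rw [mul_add]
        exact add_le_add (abs_div_norm_rpow_le hr hg hm hx htri_add)
          (abs_div_norm_rpow_le hr hg hm hx htri_sub)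

variable [NormedSpace ℝ E]

lemma abs_secondDiff_le_of_lipschitzWith_fderiv {C : NNReal} (hg : Differentiable ℝ g)
    (hC : LipschitzWith C (fderiv ℝ g)) (x z : E) : |secondDiff g x z| ≤ C * ‖z‖ ^ 2 := by
  have hderiv (w : E) :
      HasFDerivAt (fun w => g (w + z) - g w) (fderiv ℝ g (w + z) - fderiv ℝ g w) w :=
    ((hasFDerivAt_comp_add_right z).2 (hg (w + z)).hasFDerivAt).sub (hg w).hasFDerivAt
  have hbound (w : E) : ‖fderiv ℝ g (w + z) - fderiv ℝ g w‖ ≤ C * ‖z‖ := by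
    simpa using hC.norm_sub_le (w + z) w
  -- `secondDiff g x z` is the increment of `w ↦ g (w + z) - g w` from `x` to `x - z`.
  have hincr := convex_univ.norm_image_sub_le_of_norm_hasFDerivWithin_le
    (fun w _ => (hderiv w).hasFDerivWithinAt) (fun w _ => hbound w)
    (Set.mem_univ x) (Set.mem_univ (x - z))
  calc |secondDiff g x z| = ‖g (x - z + z) - g (x - z) - (g (x + z) - g x)‖ := by
        rw [secondDiff, sub_add_cancel, Real.norm_eq_abs]; ring_nf
    _ ≤ C * ‖z‖ * ‖x - z - x‖ := hincr
    _ = C * ‖z‖ ^ 2 := by rw [sub_sub_cancel_left, norm_neg]; ring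

lemma exists_abs_secondDiff_le_mul_min (hg : ContDiff ℝ 2 g) (hgc : HasCompactSupport g) :
    ∃ A : ℝ, ∀ x z, |secondDiff g x z| ≤ A * min 1 (‖z‖ ^ 2) := by
  obtain ⟨B, hB⟩ := hgc.exists_bound_of_continuous hg.continuous
  obtain ⟨C, hC⟩ := ContDiff.lipschitzWith_of_hasCompactSupport (hgc.fderiv ℝ)
    (hg.fderiv_right (m := 1) (by norm_num)) one_ne_zero
  refine ⟨max (4 * B) C, fun x z => ?_⟩
  have hA : 0 ≤ max (4 * B) C := C.coe_nonneg.trans (le_max_right _ _)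
  rw [mul_min_of_nonneg _ _ hA, mul_one]
  refine le_min ((abs_secondDiff_le_of_abs_le hB x z).trans (le_max_left _ _)) ?_
  refine (abs_secondDiff_le_of_lipschitzWith_fderiv (hg.differentiable two_ne_zero) hC x z).trans ?_
  gcongr
  exact le_max_right _ _

end SecondDifference

lemma integrableOn_Ioi_min_one_sq_mul_rpow {s : ℝ} (hs : -3 < s) (hs' : s < -1) :
    IntegrableOn (fun r : ℝ => min 1 (r ^ 2) * r ^ s) (Set.Ioi 0) := by
  rw [← Set.Ioc_union_Ioi_eq_Ioi zero_le_one]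
  refine IntegrableOn.union ?_ ?_
  · have h : IntegrableOn (fun r : ℝ => r ^ (2 + s)) (Set.Ioc 0 1) :=
      (integrableOn_Ioc_iff_integrableOn_Ioo).2
        ((intervalIntegral.integrableOn_Ioo_rpow_iff one_pos).2 (by linarith))
    refine h.congr_fun (fun r hr => ?_) measurableSet_Ioc
    simp only [min_eq_right (pow_le_one₀ hr.1.le hr.2), Real.rpow_add hr.1, Real.rpow_two]
  · refine (integrableOn_Ioi_rpow_of_lt hs' one_pos).congr_fun (fun r hr => ?_) measurableSet_Ioi
    simp only [min_eq_left (one_le_pow₀ (Set.mem_Ioi.1 hr).le), one_mul]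

section IsBigO

variable {E : Type*} [NormedAddCommGroup E]

lemma norm_rpow_isBigO_cobounded_one_add_norm_rpow (γ : ℝ) :
    (fun x : E => ‖x‖ ^ γ) =O[cobounded E] fun x => (1 + ‖x‖) ^ γ := by
  refine IsBigO.of_bound (max 1 (2 ^ (-γ))) ?_
  filter_upwards [eventually_cobounded_le_norm (1 : ℝ)] with x hx
  rw [Real.norm_of_nonneg (by positivity), Real.norm_of_nonneg (by positivity)]
  rcases le_total 0 γ with hγ | hγ
  · calc ‖x‖ ^ γ ≤ 1 * (1 + ‖x‖) ^ γ := by rw [one_mul]; gcongr; linarith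
      _ ≤ _ := by gcongr; exact le_max_left _ _
  · calc ‖x‖ ^ γ ≤ ((1 + ‖x‖) / 2) ^ γ :=
          Real.rpow_le_rpow_of_nonpos (by positivity) (by linarith) hγ
      _ = 2 ^ (-γ) * (1 + ‖x‖) ^ γ := by
          rw [Real.div_rpow (by positivity) zero_le_two, Real.rpow_neg zero_le_two,
            div_eq_inv_mul]
      _ ≤ _ := by gcongr; exact le_max_right _ _

lemma isBigO_top_one_add_norm_rpow [ProperSpace E] {f : E → ℝ} {γ : ℝ}
    (hbdd : ∀ r, f =O[𝓟 (Metric.closedBall 0 r)] fun _ => (1 : ℝ))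
    (hcob : f =O[cobounded E] fun x => ‖x‖ ^ γ) : f =O[⊤] fun x => (1 + ‖x‖) ^ γ := by
  have hfar := hcob.trans (norm_rpow_isBigO_cobounded_one_add_norm_rpow γ)
  obtain ⟨c, hc⟩ := hfar.bound
  obtain ⟨r, -, hr⟩ := (hasBasis_cobounded_norm (E := E)).eventually_iff.1 hc
  have hpos (x : E) : 0 < 1 + ‖x‖ := by positivity
  have hcont : Continuous fun x : E => (1 + ‖x‖) ^ γ :=
    (continuous_const.add continuous_norm).rpow_const fun x => Or.inl (hpos x).ne'
  have hnear : f =O[𝓟 (Metric.closedBall 0 r)] fun x => (1 + ‖x‖) ^ γ :=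
    (hbdd r).trans <| hcont.continuousOn.isBigO_rev_principal (isCompact_closedBall 0 r)
      (fun x _ => (Real.rpow_pos_of_pos (hpos x) γ).ne') 1
  obtain ⟨c', hc'⟩ := isBigO_principal.1 hnear
  refine isBigO_top.2 ⟨max c c', fun x => ?_⟩
  rcases le_total r ‖x‖ with hx | hx
  · exact (hr hx).trans (by gcongr; exact le_max_left _ _)
  · exact (hc' x (mem_closedBall_zero_iff.2 hx)).trans (by gcongr; exact le_max_right _ _)

lemma rpow_neg_isBigO_top_one_add_norm_rpow [ProperSpace E] {ρ : E → ℝ} {α s : ℝ}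
    (hρc : Continuous ρ) (hρpos : ∀ x, 0 < ρ x)
    (hρ : (fun x => ‖x‖ ^ (-α)) =O[cobounded E] ρ) (hs : 0 ≤ s) :
    (fun x => ρ x ^ (-s)) =O[⊤] fun x => (1 + ‖x‖) ^ (α * s) := by
  refine isBigO_top_one_add_norm_rpow (fun r => ?_) ?_
  · have hcont : Continuous fun x => ρ x ^ (-s) :=
      hρc.rpow_const fun x => Or.inl (hρpos x).ne'
    exact hcont.continuousOn.isBigO_principal (isCompact_closedBall 0 r) (by simp)
  · have hne : ∀ᶠ x : E in cobounded E, x ≠ 0 := eventually_ne_cobounded 0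
    have hinv := (hρ.rpow hs (.of_forall fun x => (hρpos x).le)).inv_rev <| by
      filter_upwards [hne] with x hx h0
      have : 0 < ‖x‖ := norm_pos_iff.2 hx
      exact absurd h0 (by positivity)
    refine hinv.congr (fun x => (Real.rpow_neg (hρpos x).le s).symm) fun x => ?_
    rw [← Real.rpow_mul (norm_nonneg x), neg_mul, Real.rpow_neg (norm_nonneg x), inv_inv]

lemma norm_rpow_isBigO_cobounded_of_mul_le {ρ : E → ℝ} {c r γ : ℝ} (hc : 0 < c)
    (h : ∀ x, r ≤ ‖x‖ → c * ‖x‖ ^ γ ≤ ρ x) : (fun x => ‖x‖ ^ γ) =O[cobounded E] ρ := by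
  refine IsBigO.of_bound c⁻¹ ?_
  filter_upwards [eventually_cobounded_le_norm r] with x hx
  rw [Real.norm_of_nonneg (by positivity), le_inv_mul_iff₀ hc]
  exact (h x hx).trans (le_abs_self _)

end IsBigO

section SingularIntegral

variable {E : Type*} [NormedAddCommGroup E] [NormedSpace ℝ E] [MeasurableSpace E]

/-- The symmetrized singular integral of `g` at `x` with kernel `‖z‖ ^ (-m)`. For `m = N + σ` it is
the fractional Laplacian up to its normalization constant. -/
noncomputable def symmSingularIntegral (μ : Measure E) (m : ℝ) (g : E → ℝ) (x : E) : ℝ :=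
  ∫ z, secondDiff g x z / ‖z‖ ^ m ∂μ

variable [BorelSpace E] [FiniteDimensional ℝ E] (μ : Measure E) [μ.IsAddHaarMeasure]
  {g : E → ℝ} {m : ℝ}

lemma integrable_min_one_sq_norm_div_norm_rpow [Nontrivial E] (hm : finrank ℝ E < m)
    (hm' : m < finrank ℝ E + 2) :
    Integrable (fun z : E => min 1 (‖z‖ ^ 2) / ‖z‖ ^ m) μ := by
  refine (integrable_fun_norm_addHaar μ (f := fun r : ℝ => min 1 (r ^ 2) / r ^ m)).2 ?_
  have hradial := integrableOn_Ioi_min_one_sq_mul_rpow (s := (finrank ℝ E - 1 : ℕ) - m)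
    (by rw [Nat.cast_pred finrank_pos]; linarith) (by rw [Nat.cast_pred finrank_pos]; linarith)
  refine hradial.congr_fun (fun r hr => ?_) measurableSet_Ioi
  simp only [smul_eq_mul, Real.rpow_sub hr, Real.rpow_natCast]
  ring

lemma symmSingularIntegral_isBigO_top_one [Nontrivial E] (hg : ContDiff ℝ 2 g)
    (hgc : HasCompactSupport g) (hm : finrank ℝ E < m) (hm' : m < finrank ℝ E + 2) :
    symmSingularIntegral μ m g =O[⊤] fun _ => (1 : ℝ) := by
  obtain ⟨A, hA⟩ := exists_abs_secondDiff_le_mul_min hg hgc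
  refine isBigO_top.2 ⟨∫ z, A * (min 1 (‖z‖ ^ 2) / ‖z‖ ^ m) ∂μ, fun x => ?_⟩
  rw [norm_one, mul_one]
  refine norm_integral_le_of_norm_le
    ((integrable_min_one_sq_norm_div_norm_rpow μ hm hm').const_mul A) (.of_forall fun z => ?_)
  rw [norm_div, Real.norm_eq_abs, Real.norm_of_nonneg (by positivity), ← mul_div_assoc]
  gcongr
  exact hA x z

lemma symmSingularIntegral_isBigO_cobounded (hg : Integrable g μ) (hgc : HasCompactSupport g)
    (hm : 0 ≤ m) : symmSingularIntegral μ m g =O[cobounded E] fun x => ‖x‖ ^ (-m) := by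
  obtain ⟨r, hr, hsupp⟩ := hgc.isCompact.isBounded.exists_pos_norm_le
  have hzero (y : E) (hy : r < ‖y‖) : g y = 0 :=
    image_eq_zero_of_notMem_tsupport fun h => hy.not_ge (hsupp y h)
  refine IsBigO.of_bound (2 ^ m * (2 * ∫ y, |g y| ∂μ)) ?_
  filter_upwards [tendsto_norm_cobounded_atTop.eventually_gt_atTop (2 * r)] with x hx
  have hplus : Integrable (fun z => |g (x + z)|) μ := (hg.comp_add_left x).abs
  have hminus : Integrable (fun z => |g (x - z)|) μ := (hg.comp_sub_left x).abs
  set κ := 2 ^ m * ‖x‖ ^ (-m)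
  calc ‖symmSingularIntegral μ m g x‖
      ≤ ∫ z, κ * (|g (x + z)| + |g (x - z)|) ∂μ :=
        norm_integral_le_of_norm_le ((hplus.add hminus).const_mul κ)
          (.of_forall fun z => abs_secondDiff_div_norm_rpow_le hr.le hzero hm hx z)
    _ = κ * (2 * ∫ y, |g y| ∂μ) := by
        rw [integral_const_mul, integral_add hplus hminus,
          integral_add_left_eq_self (fun y => |g y|) x,
          integral_sub_left_eq_self (fun y => |g y|) μ x, two_mul]
    _ = 2 ^ m * (2 * ∫ y, |g y| ∂μ) * ‖‖x‖ ^ (-m)‖ := by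
        rw [Real.norm_of_nonneg (by positivity)]; ring

lemma symmSingularIntegral_isBigO_top [Nontrivial E] (hg : ContDiff ℝ 2 g)
    (hgc : HasCompactSupport g) (hm : finrank ℝ E < m) (hm' : m < finrank ℝ E + 2) :
    symmSingularIntegral μ m g =O[⊤] fun x => (1 + ‖x‖) ^ (-m) :=
  isBigO_top_one_add_norm_rpow
    (fun _ => (symmSingularIntegral_isBigO_top_one μ hg hgc hm hm').mono le_top)
    (symmSingularIntegral_isBigO_cobounded μ (hg.continuous.integrable_of_hasCompactSupport hgc)
      hgc ((Nat.cast_nonneg _).trans hm.le))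

lemma symmSingularIntegral_comp_smul (g : E → ℝ) (m : ℝ) {r : ℝ} (hr : 0 < r) (x : E) :
    symmSingularIntegral μ m (fun y => g (r • y)) x
      = r ^ (m - finrank ℝ E) * symmSingularIntegral μ m g (r • x) := by
  have hintegrand (z : E) : secondDiff (fun y => g (r • y)) x z / ‖z‖ ^ m
      = r ^ m * (secondDiff g (r • x) (r • z) / ‖r • z‖ ^ m) := by
    rw [norm_smul, Real.norm_of_nonneg hr.le, Real.mul_rpow hr.le (norm_nonneg z)]
    simp only [secondDiff, smul_add, smul_sub]
    have : r ^ m ≠ 0 := by positivity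
    field_simp
  simp only [symmSingularIntegral, hintegrand]
  rw [integral_const_mul,
    Measure.integral_comp_smul μ (fun z => secondDiff g (r • x) z / ‖z‖ ^ m),
    abs_of_pos (by positivity), Real.rpow_sub hr, Real.rpow_natCast, smul_eq_mul]
  ring

end SingularIntegral

section Dilation

variable {E : Type*} [NormedAddCommGroup E] [NormedSpace ℝ E]

lemma one_add_norm_le_mul_one_add_norm_inv_smul {R : ℝ} (hR : 1 ≤ R) (x : E) :
    1 + ‖x‖ ≤ R * (1 + ‖R⁻¹ • x‖) := by
  have hR0 : 0 < R := one_pos.trans_le hR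
  rw [norm_smul, norm_inv, Real.norm_of_nonneg hR0.le, mul_add, mul_one,
    mul_inv_cancel_left₀ hR0.ne']
  gcongr

lemma mul_abs_dilation_rpow_le {w f : E → ℝ} {M C β γ σ p R : ℝ}
    (hw : ∀ x, w x ≤ M * (1 + ‖x‖) ^ β) (hf : ∀ x, |f x| ≤ C * (1 + ‖x‖) ^ (-γ))
    (hM : 0 ≤ M) (hC : 0 ≤ C) (hβ : 0 ≤ β) (hp : 0 ≤ p) (hR : 1 ≤ R) (x : E) :
    w x * |R ^ (-σ) * f (R⁻¹ • x)| ^ p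
      ≤ M * C ^ p * R ^ (β - σ * p) * (1 + ‖R⁻¹ • x‖) ^ (-(γ * p - β)) := by
  have hR0 : 0 < R := one_pos.trans_le hR
  have hscale := one_add_norm_le_mul_one_add_norm_inv_smul hR x
  have hdecay := hf (R⁻¹ • x)
  have hu : 0 < 1 + ‖R⁻¹ • x‖ := by positivity
  set u := 1 + ‖R⁻¹ • x‖
  have hweight : w x ≤ M * (R * u) ^ β := (hw x).trans (by gcongr)
  calc w x * |R ^ (-σ) * f (R⁻¹ • x)| ^ p
      ≤ M * (R * u) ^ β * (R ^ (-σ) * (C * u ^ (-γ))) ^ p := by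
        rw [abs_mul, abs_of_pos (by positivity : 0 < R ^ (-σ))]
        gcongr
    _ = M * C ^ p * (R ^ β * R ^ (-σ * p)) * (u ^ β * u ^ (-γ * p)) := by
        rw [Real.mul_rpow hR0.le hu.le, Real.mul_rpow (by positivity) (by positivity),
          Real.mul_rpow hC (by positivity), ← Real.rpow_mul hR0.le, ← Real.rpow_mul hu.le]
        ring
    _ = M * C ^ p * R ^ (β - σ * p) * u ^ (-(γ * p - β)) := by
        rw [← Real.rpow_add hR0, ← Real.rpow_add hu]
        ring_nf

variable [MeasurableSpace E] [BorelSpace E] [FiniteDimensional ℝ E] (μ : Measure E)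
  [μ.IsAddHaarMeasure]

lemma lintegral_comp_inv_smul (f : E → ENNReal) {R : ℝ} (hR : 0 < R) :
    ∫⁻ x, f (R⁻¹ • x) ∂μ = ENNReal.ofReal (R ^ finrank ℝ E) * ∫⁻ x, f x ∂μ := by
  have hR' : R⁻¹ ≠ 0 := (inv_pos.2 hR).ne'
  have hmap := (Homeomorph.smulOfNeZero R⁻¹ hR').measurableEmbedding.lintegral_map (μ := μ) f
  calc ∫⁻ x, f (R⁻¹ • x) ∂μ = ∫⁻ x, f x ∂(Measure.map (R⁻¹ • ·) μ) := hmap.symm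
    _ = ENNReal.ofReal (R ^ finrank ℝ E) * ∫⁻ x, f x ∂μ := by
        rw [Measure.map_addHaar_smul μ hR', lintegral_smul_measure, inv_pow, inv_inv,
          abs_of_pos (by positivity), smul_eq_mul]

lemma tendsto_lintegral_mul_abs_dilation_rpow {w f : E → ℝ} {β γ σ p : ℝ}
    (hw : w =O[⊤] fun x => (1 + ‖x‖) ^ β) (hf : f =O[⊤] fun x => (1 + ‖x‖) ^ (-γ))
    (hβ : 0 ≤ β) (hp : 0 ≤ p) (hγ : finrank ℝ E + β < γ * p) (hσ : finrank ℝ E + β < σ * p) :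
    Tendsto (fun R : ℝ => ∫⁻ x, ENNReal.ofReal (w x * |R ^ (-σ) * f (R⁻¹ • x)| ^ p) ∂μ)
      atTop (𝓝 0) := by
  obtain ⟨M, hM, hw⟩ := hw.exists_nonneg
  obtain ⟨C, hC, hf⟩ := hf.exists_nonneg
  have hnorm (s : ℝ) (x : E) : ‖(1 + ‖x‖) ^ s‖ = (1 + ‖x‖) ^ s :=
    Real.norm_of_nonneg (by positivity)
  simp only [isBigOWith_top, hnorm] at hw hf
  set I := ∫⁻ x : E, ENNReal.ofReal ((1 + ‖x‖) ^ (-(γ * p - β))) ∂μ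
  have hI : I ≠ ⊤ := (finite_integral_one_add_norm (by linarith)).ne
  set e := σ * p - β - finrank ℝ E with he
  have hbound (R : ℝ) (hR : 1 ≤ R) :
      ∫⁻ x, ENNReal.ofReal (w x * |R ^ (-σ) * f (R⁻¹ • x)| ^ p) ∂μ
        ≤ ENNReal.ofReal (M * C ^ p * R ^ (-e)) * I := by
    have hR0 : 0 < R := one_pos.trans_le hR
    have hexp : R ^ (β - σ * p) * R ^ finrank ℝ E = R ^ (-e) := by
      rw [← Real.rpow_natCast, ← Real.rpow_add hR0, he]; ring_nf
    calc _ ≤ ∫⁻ x, ENNReal.ofReal (M * C ^ p * R ^ (β - σ * p)) *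
            ENNReal.ofReal ((1 + ‖R⁻¹ • x‖) ^ (-(γ * p - β))) ∂μ := by
          refine lintegral_mono fun x => ?_
          rw [← ENNReal.ofReal_mul (by positivity)]
          exact ENNReal.ofReal_le_ofReal <| mul_abs_dilation_rpow_le
            (fun y => (le_abs_self _).trans (hw y)) hf hM hC hβ hp hR x
      _ = ENNReal.ofReal (M * C ^ p * R ^ (-e)) * I := by
          rw [lintegral_const_mul' _ _ ENNReal.ofReal_ne_top,
            lintegral_comp_inv_smul μ (fun x => ENNReal.ofReal ((1 + ‖x‖) ^ (-(γ * p - β)))) hR0,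
            ← mul_assoc, ← ENNReal.ofReal_mul (by positivity), mul_assoc, hexp]
  have hlim : Tendsto (fun R : ℝ => ENNReal.ofReal (M * C ^ p * R ^ (-e)) * I) atTop (𝓝 0) := by
    have hreal := (tendsto_rpow_neg_atTop (by linarith : 0 < e)).const_mul (M * C ^ p)
    simpa using ENNReal.Tendsto.mul_const (ENNReal.tendsto_ofReal hreal) (Or.inr hI)
  refine tendsto_of_tendsto_of_tendsto_of_le_of_le' tendsto_const_nhds hlim
    (.of_forall fun _ => zero_le) ?_
  filter_upwards [eventually_ge_atTop 1] with R hR using hbound R hR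

end Dilation

section FracLap

variable {N : ℕ} {σ : ℝ} {φ : EuclideanSpace ℝ (Fin N) → ℝ}

lemma fracLap_eq_mul_symmSingularIntegral (N : ℕ) (σ : ℝ) (g : EuclideanSpace ℝ (Fin N) → ℝ) :
    fracLap N σ g = fun x => fracC N σ / 2 * symmSingularIntegral volume (N + σ) g x :=
  rfl

lemma fracLap_isBigO_top [NeZero N] (hσ0 : 0 < σ) (hσ2 : σ < 2) (hφ : ContDiff ℝ 2 φ)
    (hφc : HasCompactSupport φ) :
    fracLap N σ φ =O[⊤] fun x => (1 + ‖x‖) ^ (-(N + σ)) := by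
  rw [fracLap_eq_mul_symmSingularIntegral]
  exact (symmSingularIntegral_isBigO_top volume hφ hφc (by simpa) (by simpa)).const_mul_left _

lemma fracLap_comp_smul (φ : EuclideanSpace ℝ (Fin N) → ℝ) {r : ℝ} (hr : 0 < r)
    (x : EuclideanSpace ℝ (Fin N)) :
    fracLap N σ (fun y => φ (r • y)) x = r ^ σ * fracLap N σ φ (r • x) := by
  simp only [fracLap_eq_mul_symmSingularIntegral, symmSingularIntegral_comp_smul volume φ _ hr,
    finrank_euclideanSpace_fin, add_sub_cancel_left]
  ring

lemma fracLap_comp_inv_smul (φ : EuclideanSpace ℝ (Fin N) → ℝ) {R : ℝ} (hR : 0 < R)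
    (x : EuclideanSpace ℝ (Fin N)) :
    fracLap N σ (fun y => φ (R⁻¹ • y)) x = R ^ (-σ) * fracLap N σ φ (R⁻¹ • x) := by
  rw [fracLap_comp_smul φ (inv_pos.2 hR), Real.inv_rpow hR.le, Real.rpow_neg hR.le]

theorem weighted_fracLap_cutoff_tendsto_zero_general (hN : 1 ≤ N) (hσ0 : 0 < σ) (hσ2 : σ < 2)
    (hφ : ContDiff ℝ 2 φ) (hφc : HasCompactSupport φ)
    {ρ : EuclideanSpace ℝ (Fin N) → ℝ} (hρc : Continuous ρ) (hρpos : ∀ x, 0 < ρ x)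
    {α : ℝ} (hα : 0 ≤ α) (hρ : (fun x => ‖x‖ ^ (-α)) =O[cobounded _] ρ)
    {p q : ℝ} (hpq : p.HolderConjugate q) (hcond : α < (p * σ - N) / (p - 1)) :
    Tendsto
      (fun R : ℝ =>
        ∫⁻ x : EuclideanSpace ℝ (Fin N),
          ENNReal.ofReal (ρ x ^ (-(p / q)) * |fracLap N σ (fun y => φ (R⁻¹ • y)) x| ^ p))
      atTop (𝓝 0) := by
  have : NeZero N := ⟨Nat.one_le_iff_ne_zero.1 hN⟩
  have hp : 0 < p - 1 := hpq.sub_one_pos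
  have hexp : N + α * (p - 1) < σ * p := by linarith [(lt_div_iff₀ hp).1 hcond]
  have hexp' : N + α * (p - 1) < (N + σ) * p := by
    have : 0 ≤ N * p := mul_nonneg N.cast_nonneg hpq.nonneg
    linarith
  rw [hpq.div_conj_eq_sub_one]
  refine (tendsto_lintegral_mul_abs_dilation_rpow volume
    (rpow_neg_isBigO_top_one_add_norm_rpow hρc hρpos hρ hp.le)
    (fracLap_isBigO_top hσ0 hσ2 hφ hφc) (by positivity) hpq.nonneg
    (by simpa using hexp') (by simpa using hexp)).congr' ?_
  filter_upwards [eventually_gt_atTop 0] with R hR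
  simp only [fracLap_comp_inv_smul φ hR]

end FracLap

section RadialCutoff

variable {E : Type*}

lemma contDiff_comp_norm_of_eqOn_const [NormedAddCommGroup E] [InnerProductSpace ℝ E] {η : ℝ → ℝ}
    {n : WithTop ℕ∞} {c r : ℝ} (hη : ContDiff ℝ n η) (hr : 0 < r)
    (hconst : ∀ s, 0 ≤ s → s ≤ r → η s = c) : ContDiff ℝ n fun x : E => η ‖x‖ := by
  rw [contDiff_iff_contDiffAt]
  intro x
  rcases eq_or_ne x 0 with rfl | hx
  · refine contDiffAt_const (c := c) |>.congr_of_eventuallyEq ?_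
    filter_upwards [Metric.closedBall_mem_nhds (0 : E) hr] with y hy
    exact hconst _ (norm_nonneg y) (mem_closedBall_zero_iff.1 hy)
  · exact hη.contDiffAt.comp x (contDiffAt_norm ℝ hx)

lemma hasCompactSupport_comp_norm [NormedAddCommGroup E] [ProperSpace E] {η : ℝ → ℝ} {r : ℝ}
    (hη : ∀ s, r ≤ s → η s = 0) : HasCompactSupport fun x : E => η ‖x‖ :=
  HasCompactSupport.intro (isCompact_closedBall 0 r) fun _ hx =>
    hη _ (not_le.1 (mt mem_closedBall_zero_iff.2 hx)).le

end RadialCutoff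

/-- For a slowly decaying density (`ρ(x) ≥ Ĉ|x|^{−α}` with `α < σ`) and `p`
with `α < (pσ−N)/(p−1)`, the weighted integral
`∫ ρ^{−p/q} |(−Δ)^{σ/2} φ_R|^p dx` tends to `0` as `R → ∞`. -/
theorem weighted_fracLap_cutoff_tendsto_zero
    (N : ℕ) (hN : 1 ≤ N) (σ : ℝ) (hσ0 : 0 < σ) (hσ2 : σ < 2)
    (η : ℝ → ℝ) (hη_smooth : ContDiff ℝ (⊤ : ℕ∞) η)
    (hη_range : ∀ s : ℝ, 0 ≤ s → η s ∈ Set.Icc (0 : ℝ) 1)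
    (hη_mono : AntitoneOn η (Set.Ici 0))
    (hη_one : ∀ s : ℝ, 0 ≤ s → s ≤ 1 → η s = 1)
    (hη_zero : ∀ s : ℝ, 2 ≤ s → η s = 0)
    (ρ : EuclideanSpace ℝ (Fin N) → ℝ) (hρc : Continuous ρ)
    (hρpos : ∀ x, 0 < ρ x)
    (Chat Rhat α : ℝ) (hChat : 0 < Chat) (hRhat : 0 < Rhat)
    (hα0 : 0 < α) (hασ : α < σ)
    (hlower : ∀ x : EuclideanSpace ℝ (Fin N), Rhat ≤ ‖x‖ →
      Chat * ‖x‖ ^ (-α) ≤ ρ x)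
    (p q : ℝ) (hp : 1 < p) (hq : q = p / (p - 1))
    (hcond : α < (p * σ - (N : ℝ)) / (p - 1)) :
    Tendsto
      (fun R : ℝ =>
        ∫⁻ x : EuclideanSpace ℝ (Fin N),
          ENNReal.ofReal
            (ρ x ^ (-(p / q)) * |fracLap N σ (fun y => η (‖y‖ / R)) x| ^ p))
      atTop (nhds 0) := by
  have hdilate : ∀ᶠ R : ℝ in atTop, (fun y : EuclideanSpace ℝ (Fin N) => η ‖R⁻¹ • y‖)
      = fun y => η (‖y‖ / R) := by
    filter_upwards [eventually_gt_atTop 0] with R hR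
    simp only [norm_smul, norm_inv, Real.norm_of_nonneg hR.le, div_eq_inv_mul]
  exact (weighted_fracLap_cutoff_tendsto_zero_general (φ := fun y => η ‖y‖) hN hσ0 hσ2
    (contDiff_comp_norm_of_eqOn_const (hη_smooth.of_le (by norm_cast)) one_pos hη_one)
    (hasCompactSupport_comp_norm hη_zero) hρc hρpos hα0.le
    (norm_rpow_isBigO_cobounded_of_mul_le hChat hlower)
    ((Real.holderConjugate_iff_eq_conjExponent hp).2 hq) hcond).congr'
    (hdilate.mono fun R hR => by simp only [hR])
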